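/- Under the adapted pure-frontal setup with focal data, assume κ_t(0) ≠ 0, that 0 is a singular point of C_j (equivalently r_c(0) = 0), and that x_j is nonzero near 0 so that e_j = x_j/‖x_j‖ is a unit normal of C_j. Then the derivative of e_j in the direction of the principal vector field V_j vanishes at 0: d(e_j)(V_j)(0) = 0. Consequently the pair (C_j, e_j) : ℝ² → ℝ³ × ℝ³ is not an immersion at 0, i.e. C_j is a frontal with unit normal e_j but not a front at 0. -/

import Mathlib

open Filter

noncomputable section

/-- Vectors in ℝ³, modeled as `Fin 3 → ℝ`. -/
abbrev R3 : Type := Fin 3 → ℝ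

/-- The Euclidean inner product on ℝ³. -/
def dot3 (a b : R3) : ℝ := a 0 * b 0 + a 1 * b 1 + a 2 * b 2

/-- The Euclidean norm on ℝ³. -/
def norm3 (a : R3) : ℝ := Real.sqrt (dot3 a a)

/-- Partial derivative in the `u`-direction. -/
def pu {E : Type*} [NormedAddCommGroup E] [NormedSpace ℝ E] (F : ℝ × ℝ → E) (p : ℝ × ℝ) : E :=
  fderiv ℝ F p (1, 0)

/-- Partial derivative in the `v`-direction. -/
def pv {E : Type*} [NormedAddCommGroup E] [NormedSpace ℝ E] (F : ℝ × ℝ → E) (p : ℝ × ℝ) : E :=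
  fderiv ℝ F p (0, 1)

/-- The adapted pure-frontal setup: `f` is a frontal with unit normal `ν`,
`f_v = v·h`, `ν_v = v·ν₁`, the frame `{f_u, h, ν}` is linearly independent everywhere
and orthonormal along the `u`-axis. -/
structure AdaptedPureFrontal (f ν h ν₁ : ℝ × ℝ → R3) : Prop where
  smooth_f : ContDiff ℝ (⊤ : ℕ∞) f
  smooth_ν : ContDiff ℝ (⊤ : ℕ∞) ν
  smooth_h : ContDiff ℝ (⊤ : ℕ∞) h
  smooth_ν₁ : ContDiff ℝ (⊤ : ℕ∞) ν₁
  unit_ν : ∀ p, dot3 (ν p) (ν p) = 1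
  orth_fu_ν : ∀ p, dot3 (pu f p) (ν p) = 0
  orth_fv_ν : ∀ p, dot3 (pv f p) (ν p) = 0
  fv_eq : ∀ p : ℝ × ℝ, pv f p = p.2 • h p
  νv_eq : ∀ p : ℝ × ℝ, pv ν p = p.2 • ν₁ p
  indep : ∀ p, LinearIndependent ℝ ![pu f p, h p, ν p]
  adapted_fu : ∀ u : ℝ, dot3 (pu f (u, 0)) (pu f (u, 0)) = 1
  adapted_h : ∀ u : ℝ, dot3 (h (u, 0)) (h (u, 0)) = 1
  adapted_fu_h : ∀ u : ℝ, dot3 (pu f (u, 0)) (h (u, 0)) = 0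
  adapted_h_ν : ∀ u : ℝ, dot3 (h (u, 0)) (ν (u, 0)) = 0

/-- Ẽ = ⟨f_u, f_u⟩. -/
def Et (f : ℝ × ℝ → R3) (p : ℝ × ℝ) : ℝ := dot3 (pu f p) (pu f p)

/-- F̃ = ⟨f_u, h⟩. -/
def Ft (f h : ℝ × ℝ → R3) (p : ℝ × ℝ) : ℝ := dot3 (pu f p) (h p)

/-- G̃ = ⟨h, h⟩. -/
def Gt (h : ℝ × ℝ → R3) (p : ℝ × ℝ) : ℝ := dot3 (h p) (h p)

/-- L̃ = −⟨f_u, ν_u⟩. -/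
def Lt (f ν : ℝ × ℝ → R3) (p : ℝ × ℝ) : ℝ := -dot3 (pu f p) (pu ν p)

/-- M̃ = −⟨h, ν_u⟩. -/
def Mt (h ν : ℝ × ℝ → R3) (p : ℝ × ℝ) : ℝ := -dot3 (h p) (pu ν p)

/-- Ñ₁ = −⟨h, ν₁⟩. -/
def Nt1 (h ν₁ : ℝ × ℝ → R3) (p : ℝ × ℝ) : ℝ := -dot3 (h p) (ν₁ p)

/-- The Gaussian curvature K = (L̃Ñ₁ − M̃²)/(ẼG̃ − F̃²). -/
def Kg (f ν h ν₁ : ℝ × ℝ → R3) (p : ℝ × ℝ) : ℝ :=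
  (Lt f ν p * Nt1 h ν₁ p - Mt h ν p ^ 2) / (Et f p * Gt h p - Ft f h p ^ 2)

/-- The mean curvature H = (ẼÑ₁ − 2F̃M̃ + G̃L̃)/(2(ẼG̃ − F̃²)). -/
def Hm (f ν h ν₁ : ℝ × ℝ → R3) (p : ℝ × ℝ) : ℝ :=
  (Et f p * Nt1 h ν₁ p - 2 * Ft f h p * Mt h ν p + Gt h p * Lt f ν p) /
    (2 * (Et f p * Gt h p - Ft f h p ^ 2))

/-- The principal curvature κ = H + ε√(H² − K); `ε = 1` gives κ₁ and `ε = -1` gives κ₂. -/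
def kap (f ν h ν₁ : ℝ × ℝ → R3) (ε : ℝ) (p : ℝ × ℝ) : ℝ :=
  Hm f ν h ν₁ p + ε * Real.sqrt (Hm f ν h ν₁ p ^ 2 - Kg f ν h ν₁ p)

/-- First component of the principal vector field V = −v(M̃ − κF̃)∂_u + (L̃ − κẼ)∂_v. -/
def V1c (f ν h ν₁ : ℝ × ℝ → R3) (ε : ℝ) (p : ℝ × ℝ) : ℝ :=
  -(p.2 * (Mt h ν p - kap f ν h ν₁ ε p * Ft f h p))

/-- Second component of the principal vector field V = −v(M̃ − κF̃)∂_u + (L̃ − κẼ)∂_v. -/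
def V2c (f ν h ν₁ : ℝ × ℝ → R3) (ε : ℝ) (p : ℝ × ℝ) : ℝ :=
  Lt f ν p - kap f ν h ν₁ ε p * Et f p

/-- Directional derivative of `g` along the principal vector field V. -/
def VD (f ν h ν₁ : ℝ × ℝ → R3) (ε : ℝ) {E : Type*} [NormedAddCommGroup E] [NormedSpace ℝ E]
    (g : ℝ × ℝ → E) (p : ℝ × ℝ) : E :=
  V1c f ν h ν₁ ε p • pu g p + V2c f ν h ν₁ ε p • pv g p

/-- The radius of principal curvature ρ = 1/κ. -/
def rho (f ν h ν₁ : ℝ × ℝ → R3) (ε : ℝ) (p : ℝ × ℝ) : ℝ := (kap f ν h ν₁ ε p)⁻¹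

/-- The focal surface C = f + ρ·ν. -/
def Cf (f ν h ν₁ : ℝ × ℝ → R3) (ε : ℝ) (p : ℝ × ℝ) : R3 :=
  f p + rho f ν h ν₁ ε p • ν p

/-- The normal direction x = −(M̃ − κF̃)·f_u + (L̃ − κẼ)·h of the focal surface. -/
def xj (f ν h ν₁ : ℝ × ℝ → R3) (ε : ℝ) (p : ℝ × ℝ) : R3 :=
  (-(Mt h ν p - kap f ν h ν₁ ε p * Ft f h p)) • pu f p +
    (Lt f ν p - kap f ν h ν₁ ε p * Et f p) • h p

/-- The unit normal e = x/‖x‖ of the focal surface. -/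
def ej (f ν h ν₁ : ℝ × ℝ → R3) (ε : ℝ) (p : ℝ × ℝ) : R3 :=
  (norm3 (xj f ν h ν₁ ε p))⁻¹ • xj f ν h ν₁ ε p

/-- The limiting normal curvature κ_ν(u) = L̃(u,0). -/
def kν (f ν : ℝ × ℝ → R3) (u : ℝ) : ℝ := Lt f ν (u, 0)

/-- The cuspidal torsion κ_t(u) = M̃(u,0). -/
def kt (h ν : ℝ × ℝ → R3) (u : ℝ) : ℝ := Mt h ν (u, 0)

/-- The bias r_b(u) = 3Ñ₁(u,0). -/
def rb (h ν₁ : ℝ × ℝ → R3) (u : ℝ) : ℝ := 3 * Nt1 h ν₁ (u, 0)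

/-- The secondary cuspidal curvature r_c(u) = 24((Ñ₁)_v − 2F̃_vM̃ − G̃_vÑ₁)(u,0). -/
def rc (f ν h ν₁ : ℝ × ℝ → R3) (u : ℝ) : ℝ :=
  24 * (pv (Nt1 h ν₁) (u, 0) - 2 * pv (Ft f h) (u, 0) * Mt h ν (u, 0) -
    pv (Gt h) (u, 0) * Nt1 h ν₁ (u, 0))

/-- The singular curvature κ_s(u) = ⟨f_uu, h⟩(u,0). -/
def ks (f h : ℝ × ℝ → R3) (u : ℝ) : ℝ := dot3 (pu (pu f) (u, 0)) (h (u, 0))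

/-- The rank of the differential of `F` at `p`. -/
def rankAt (F : ℝ × ℝ → R3) (p : ℝ × ℝ) : ℕ :=
  Module.finrank ℝ (LinearMap.range (fderiv ℝ F p).toLinearMap)

/-! Along `v = 0` the vectors `f_u`, `h`, `ν` are orthonormal, and differentiating `f_v = v h`,
`ν_v = v ν₁` and `⟨h, ν⟩ = 0` gives `f_uv = 0`, `ν_uv = 0`, `ν_v = 0` and
`h_v = F̃_v f_u + (G̃_v / 2) h` there. The condition `r_c = 0` says exactly that `Ñ₁` varies to
first order in `v` as if only the frame `(f_u, h)` moved. Hence the numerators and denominators of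
`K` and `H` all have logarithmic derivative `G̃_v`, so `K`, `H` and `κ` are stationary in the
direction `∂_v`, while `x_v = (G̃_v / 2) x` is proportional to `x`. Therefore `∂_v` kills both
`C = f + κ⁻¹ ν` and `e = x / ‖x‖`, and on `v = 0` the principal field `V` is a multiple of `∂_v`. -/

section Dot3

theorem dot3_eq_dotProduct (a b : R3) : dot3 a b = a ⬝ᵥ b := by
  simp [dot3, dotProduct, Fin.sum_univ_three]

theorem dot3_comm (a b : R3) : dot3 a b = dot3 b a := by
  simp only [dot3_eq_dotProduct, dotProduct_comm]

@[simp]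
theorem dot3_zero_left (a : R3) : dot3 0 a = 0 := by
  simp [dot3_eq_dotProduct]

@[simp]
theorem dot3_zero_right (a : R3) : dot3 a 0 = 0 := by
  simp [dot3_eq_dotProduct]

theorem dot3_add_left (a b c : R3) : dot3 (a + b) c = dot3 a c + dot3 b c := by
  simp only [dot3_eq_dotProduct, add_dotProduct]

theorem dot3_smul_left (r : ℝ) (a b : R3) : dot3 (r • a) b = r * dot3 a b := by
  simp only [dot3_eq_dotProduct, smul_dotProduct, smul_eq_mul]

theorem dot3_self_pos {a : R3} (ha : a ≠ 0) : 0 < dot3 a a := by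
  simpa [dot3_eq_dotProduct] using Matrix.dotProduct_self_star_pos_iff.2 ha

theorem norm3_pos {a : R3} (ha : a ≠ 0) : 0 < norm3 a :=
  Real.sqrt_pos.2 (dot3_self_pos ha)

theorem dot3_self_eq_norm3_mul_self (a : R3) : dot3 a a = norm3 a * norm3 a :=
  (Real.mul_self_sqrt (add_nonneg (add_nonneg (mul_self_nonneg _) (mul_self_nonneg _))
    (mul_self_nonneg _))).symm

theorem eq_sum_dotProduct_smul_of_orthonormal {n R : Type*} [Fintype n] [DecidableEq n]
    [CommRing R] {w : n → n → R} (hw : ∀ i j, w i ⬝ᵥ w j = if i = j then 1 else 0) (x : n → R) :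
    x = ∑ i, (w i ⬝ᵥ x) • w i := by
  have hww : Matrix.of w * (Matrix.of w).transpose = 1 := Matrix.ext hw
  have hx : (Matrix.of w).transpose.mulVec ((Matrix.of w).mulVec x) = x := by
    rw [Matrix.mulVec_mulVec, mul_eq_one_comm.1 hww, Matrix.one_mulVec]
  conv_lhs => rw [← hx, Matrix.mulVec_eq_sum]
  simp only [op_smul_eq_smul]
  rfl

theorem eq_dot3_smul_add_of_orthonormal {a b n : R3} (haa : dot3 a a = 1) (hbb : dot3 b b = 1)
    (hnn : dot3 n n = 1) (hab : dot3 a b = 0) (han : dot3 a n = 0) (hbn : dot3 b n = 0)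
    (x : R3) : x = dot3 a x • a + dot3 b x • b + dot3 n x • n := by
  have horth (i j : Fin 3) : ![a, b, n] i ⬝ᵥ ![a, b, n] j = if i = j then 1 else 0 := by
    fin_cases i <;> fin_cases j <;>
      simp [← dot3_eq_dotProduct, haa, hbb, hnn, hab, han, hbn, dot3_comm b a, dot3_comm n a,
        dot3_comm n b]
  simpa [Fin.sum_univ_three, dot3_eq_dotProduct]
    using eq_sum_dotProduct_smul_of_orthonormal horth x

end Dot3

section Calculus

theorem hasDerivAt_dot3 {a b : ℝ → R3} {a' b' : R3} {t : ℝ} (ha : HasDerivAt a a' t)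
    (hb : HasDerivAt b b' t) :
    HasDerivAt (fun s => dot3 (a s) (b s)) (dot3 a' (b t) + dot3 (a t) b') t := by
  have ha := hasDerivAt_pi.1 ha
  have hb := hasDerivAt_pi.1 hb
  refine ((((ha 0).mul (hb 0)).add ((ha 1).mul (hb 1))).add ((ha 2).mul (hb 2))).congr_deriv ?_
  simp only [dot3]; ring

variable {F : Type*} [NormedAddCommGroup F] [NormedSpace ℝ F]

theorem differentiableAt_dot3 {a b : F → R3} {x : F} (ha : DifferentiableAt ℝ a x)
    (hb : DifferentiableAt ℝ b x) : DifferentiableAt ℝ (fun y => dot3 (a y) (b y)) x := by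
  have ha := differentiableAt_pi.1 ha
  have hb := differentiableAt_pi.1 hb
  exact (((ha 0).mul (hb 0)).add ((ha 1).mul (hb 1))).add ((ha 2).mul (hb 2))

theorem differentiableAt_norm3 {a : F → R3} {x : F} (ha : DifferentiableAt ℝ a x) (h0 : a x ≠ 0) :
    DifferentiableAt ℝ (fun y => norm3 (a y)) x :=
  (differentiableAt_dot3 ha ha).sqrt (dot3_self_pos h0).ne'

theorem hasDerivAt_norm3_of_smul {x : ℝ → R3} {c t : ℝ} (hx : HasDerivAt x (c • x t) t)
    (h0 : x t ≠ 0) : HasDerivAt (fun s => norm3 (x s)) (c * norm3 (x t)) t := by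
  refine ((hasDerivAt_dot3 hx hx).sqrt (dot3_self_pos h0).ne').congr_deriv ?_
  have hN : norm3 (x t) ≠ 0 := (norm3_pos h0).ne'
  change _ / (2 * norm3 (x t)) = _
  rw [dot3_comm (x t), dot3_smul_left, dot3_self_eq_norm3_mul_self]
  field_simp
  ring

theorem hasDerivAt_inv_smul_of_proportional {𝕜 E : Type*} [NontriviallyNormedField 𝕜]
    [NormedAddCommGroup E] [NormedSpace 𝕜 E] {N : 𝕜 → 𝕜} {x : 𝕜 → E} {c t : 𝕜}
    (hN : HasDerivAt N (c * N t) t) (hx : HasDerivAt x (c • x t) t) (h0 : N t ≠ 0) :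
    HasDerivAt (fun s => (N s)⁻¹ • x s) 0 t := by
  refine ((hN.inv h0).smul hx).congr_deriv ?_
  rw [Pi.inv_apply, smul_smul, ← add_smul]
  convert zero_smul 𝕜 (x t)
  field_simp
  ring

theorem hasDerivAt_div_of_proportional {𝕜 : Type*} [NontriviallyNormedField 𝕜] {x N : 𝕜 → 𝕜}
    {c t : 𝕜} (hx : HasDerivAt x (c * x t) t) (hN : HasDerivAt N (c * N t) t) (h0 : N t ≠ 0) :
    HasDerivAt (fun s => x s / N s) 0 t := by
  simpa only [div_eq_inv_mul, smul_eq_mul] using hasDerivAt_inv_smul_of_proportional hN hx h0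

variable {E : Type*} [NormedAddCommGroup E] [NormedSpace ℝ E]

theorem hasDerivAt_pv {g : ℝ × ℝ → E} {u v : ℝ} (hg : DifferentiableAt ℝ g (u, v)) :
    HasDerivAt (fun t => g (u, t)) (pv g (u, v)) v :=
  hg.hasFDerivAt.comp_hasDerivAt v ((hasDerivAt_const v u).prodMk (hasDerivAt_id v))

theorem pv_eq_of_hasDerivAt {g : ℝ × ℝ → E} {g' : E} {u v : ℝ}
    (hg : DifferentiableAt ℝ g (u, v)) (h : HasDerivAt (fun t => g (u, t)) g' v) :
    pv g (u, v) = g' :=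
  (hasDerivAt_pv hg).unique h

theorem pv_dot3 {a b : ℝ × ℝ → R3} {p : ℝ × ℝ} (ha : DifferentiableAt ℝ a p)
    (hb : DifferentiableAt ℝ b p) :
    pv (fun q => dot3 (a q) (b q)) p = dot3 (pv a p) (b p) + dot3 (a p) (pv b p) :=
  pv_eq_of_hasDerivAt (differentiableAt_dot3 ha hb)
    (hasDerivAt_dot3 (hasDerivAt_pv ha) (hasDerivAt_pv hb))

theorem pv_neg (g : ℝ × ℝ → E) (p : ℝ × ℝ) : pv (fun q => -g q) p = -pv g p := by
  simp [pv, fderiv_fun_neg]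

theorem differentiableAt_pu {g : ℝ × ℝ → E} {p : ℝ × ℝ} (hg : ContDiffAt ℝ 2 g p) :
    DifferentiableAt ℝ (pu g) p :=
  ((hg.fderiv_right (m := 1) (by norm_num)).differentiableAt one_ne_zero).clm_apply
    (differentiableAt_const _)

theorem pv_pu_eq_pu_pv {g : ℝ × ℝ → E} {p : ℝ × ℝ} (hg : ContDiffAt ℝ 2 g p) :
    pv (pu g) p = pu (pv g) p := by
  have hd : DifferentiableAt ℝ (fderiv ℝ g) p :=
    (hg.fderiv_right (m := 1) (by norm_num)).differentiableAt one_ne_zero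
  have hsymm : IsSymmSndFDerivAt ℝ g p := hg.isSymmSndFDerivAt (by simp)
  have hiter (w z : ℝ × ℝ) :
      fderiv ℝ (fun q => fderiv ℝ g q w) p z = fderiv ℝ (fderiv ℝ g) p z w := by
    simp [fderiv_clm_apply hd (differentiableAt_const w)]
  exact (hiter _ _).trans ((hsymm _ _).trans (hiter _ _).symm)

theorem pu_snd_smul {k : ℝ × ℝ → E} {p : ℝ × ℝ} (hk : DifferentiableAt ℝ k p) :
    pu (fun q => q.2 • k q) p = p.2 • pu k p := by
  simp [pu, fderiv_fun_smul differentiableAt_snd hk, fderiv_snd]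

theorem pv_pu_of_pv_eq_snd_smul {g k : ℝ × ℝ → E} {p : ℝ × ℝ} (hg : ContDiffAt ℝ 2 g p)
    (hk : DifferentiableAt ℝ k p) (h : ∀ q : ℝ × ℝ, pv g q = q.2 • k q) :
    pv (pu g) p = p.2 • pu k p := by
  rw [pv_pu_eq_pu_pv hg, funext h, pu_snd_smul hk]

theorem not_injective_fderiv_of_pv_eq_zero {g : ℝ × ℝ → E} {p : ℝ × ℝ} (hg : pv g p = 0) :
    ¬ Function.Injective ⇑(fderiv ℝ g p) := by
  intro hinj
  have hzero : ((0 : ℝ), (1 : ℝ)) = 0 := hinj (hg.trans (map_zero _).symm)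
  simp at hzero

end Calculus

/-- The determinant `ẼG̃ − F̃²` of the first fundamental form in the frame `(f_u, h)`: up to a
constant, the common denominator of `K` and `H`. -/
def gramDet (f h : ℝ × ℝ → R3) (p : ℝ × ℝ) : ℝ := Et f p * Gt h p - Ft f h p ^ 2

namespace AdaptedPureFrontal

variable {f ν h ν₁ : ℝ × ℝ → R3} {ε u : ℝ}

section Differentiability

theorem differentiable_h (H : AdaptedPureFrontal f ν h ν₁) : Differentiable ℝ h :=
  H.smooth_h.differentiable (by simp)

theorem differentiable_ν (H : AdaptedPureFrontal f ν h ν₁) : Differentiable ℝ ν :=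
  H.smooth_ν.differentiable (by simp)

theorem differentiable_ν₁ (H : AdaptedPureFrontal f ν h ν₁) : Differentiable ℝ ν₁ :=
  H.smooth_ν₁.differentiable (by simp)

theorem contDiff_two_f (H : AdaptedPureFrontal f ν h ν₁) : ContDiff ℝ 2 f :=
  H.smooth_f.of_le (by norm_cast)

theorem contDiff_two_ν (H : AdaptedPureFrontal f ν h ν₁) : ContDiff ℝ 2 ν :=
  H.smooth_ν.of_le (by norm_cast)

theorem differentiable_pu_f (H : AdaptedPureFrontal f ν h ν₁) : Differentiable ℝ (pu f) :=
  fun _ => differentiableAt_pu H.contDiff_two_f.contDiffAt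

theorem differentiable_pu_ν (H : AdaptedPureFrontal f ν h ν₁) : Differentiable ℝ (pu ν) :=
  fun _ => differentiableAt_pu H.contDiff_two_ν.contDiffAt

theorem differentiable_Et (H : AdaptedPureFrontal f ν h ν₁) : Differentiable ℝ (Et f) :=
  fun p => differentiableAt_dot3 (H.differentiable_pu_f p) (H.differentiable_pu_f p)

theorem differentiable_Ft (H : AdaptedPureFrontal f ν h ν₁) : Differentiable ℝ (Ft f h) :=
  fun p => differentiableAt_dot3 (H.differentiable_pu_f p) (H.differentiable_h p)

theorem differentiable_Gt (H : AdaptedPureFrontal f ν h ν₁) : Differentiable ℝ (Gt h) :=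
  fun p => differentiableAt_dot3 (H.differentiable_h p) (H.differentiable_h p)

theorem differentiable_Lt (H : AdaptedPureFrontal f ν h ν₁) : Differentiable ℝ (Lt f ν) :=
  fun p => (differentiableAt_dot3 (H.differentiable_pu_f p) (H.differentiable_pu_ν p)).neg

theorem differentiable_Mt (H : AdaptedPureFrontal f ν h ν₁) : Differentiable ℝ (Mt h ν) :=
  fun p => (differentiableAt_dot3 (H.differentiable_h p) (H.differentiable_pu_ν p)).neg

theorem differentiable_Nt1 (H : AdaptedPureFrontal f ν h ν₁) : Differentiable ℝ (Nt1 h ν₁) :=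
  fun p => (differentiableAt_dot3 (H.differentiable_h p) (H.differentiable_ν₁ p)).neg

theorem Et_axis (H : AdaptedPureFrontal f ν h ν₁) : Et f (u, 0) = 1 := H.adapted_fu u

theorem Ft_axis (H : AdaptedPureFrontal f ν h ν₁) : Ft f h (u, 0) = 0 := H.adapted_fu_h u

theorem Gt_axis (H : AdaptedPureFrontal f ν h ν₁) : Gt h (u, 0) = 1 := H.adapted_h u

theorem gramDet_axis (H : AdaptedPureFrontal f ν h ν₁) : gramDet f h (u, 0) = 1 := by
  simp [gramDet, H.Et_axis, H.Ft_axis, H.Gt_axis]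

theorem gramDet_axis_ne_zero (H : AdaptedPureFrontal f ν h ν₁) : gramDet f h (u, 0) ≠ 0 :=
  ne_of_eq_of_ne H.gramDet_axis one_ne_zero

theorem differentiable_gramDet (H : AdaptedPureFrontal f ν h ν₁) :
    Differentiable ℝ (gramDet f h) :=
  (H.differentiable_Et.mul H.differentiable_Gt).sub (H.differentiable_Ft.pow 2)

theorem differentiableAt_Kg (H : AdaptedPureFrontal f ν h ν₁) :
    DifferentiableAt ℝ (Kg f ν h ν₁) (u, 0) := by
  have hnum := (H.differentiable_Lt.mul H.differentiable_Nt1).sub (H.differentiable_Mt.pow 2)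
  have hden := (H.differentiable_gramDet (u, 0)).inv H.gramDet_axis_ne_zero
  exact (hnum (u, 0)).mul hden

theorem differentiableAt_Hm (H : AdaptedPureFrontal f ν h ν₁) :
    DifferentiableAt ℝ (Hm f ν h ν₁) (u, 0) := by
  have hnum := ((H.differentiable_Et.mul H.differentiable_Nt1).sub
    ((H.differentiable_Ft.const_mul 2).mul H.differentiable_Mt)).add
    (H.differentiable_Gt.mul H.differentiable_Lt)
  have hden := ((H.differentiable_gramDet (u, 0)).const_mul 2).inv
    (mul_ne_zero two_ne_zero H.gramDet_axis_ne_zero)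
  exact (hnum (u, 0)).mul hden

theorem differentiableAt_kap (H : AdaptedPureFrontal f ν h ν₁)
    (hHK : Hm f ν h ν₁ (u, 0) ^ 2 - Kg f ν h ν₁ (u, 0) ≠ 0) :
    DifferentiableAt ℝ (kap f ν h ν₁ ε) (u, 0) :=
  H.differentiableAt_Hm.add
    ((((H.differentiableAt_Hm.pow 2).sub H.differentiableAt_Kg).sqrt hHK).const_mul ε)

theorem differentiableAt_Cf (H : AdaptedPureFrontal f ν h ν₁)
    (hHK : Hm f ν h ν₁ (u, 0) ^ 2 - Kg f ν h ν₁ (u, 0) ≠ 0)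
    (hκ : kap f ν h ν₁ ε (u, 0) ≠ 0) : DifferentiableAt ℝ (Cf f ν h ν₁ ε) (u, 0) :=
  (H.contDiff_two_f.differentiable two_ne_zero _).add
    (((H.differentiableAt_kap hHK).inv hκ).smul (H.differentiable_ν _))

theorem differentiableAt_xj (H : AdaptedPureFrontal f ν h ν₁)
    (hHK : Hm f ν h ν₁ (u, 0) ^ 2 - Kg f ν h ν₁ (u, 0) ≠ 0) :
    DifferentiableAt ℝ (xj f ν h ν₁ ε) (u, 0) :=
  have hκ := H.differentiableAt_kap (ε := ε) hHK
  ((((H.differentiable_Mt _).sub (hκ.mul (H.differentiable_Ft _))).neg).smul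
    (H.differentiable_pu_f _)).add
    (((H.differentiable_Lt _).sub (hκ.mul (H.differentiable_Et _))).smul (H.differentiable_h _))

theorem differentiableAt_ej (H : AdaptedPureFrontal f ν h ν₁)
    (hHK : Hm f ν h ν₁ (u, 0) ^ 2 - Kg f ν h ν₁ (u, 0) ≠ 0)
    (hx : xj f ν h ν₁ ε (u, 0) ≠ 0) : DifferentiableAt ℝ (ej f ν h ν₁ ε) (u, 0) :=
  have hxd := H.differentiableAt_xj hHK
  ((differentiableAt_norm3 hxd hx).inv (norm3_pos hx).ne').smul hxd

end Differentiability

section FrameDerivatives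

theorem pv_f_axis (H : AdaptedPureFrontal f ν h ν₁) : pv f (u, 0) = 0 := by
  simp [H.fv_eq]

theorem pv_ν_axis (H : AdaptedPureFrontal f ν h ν₁) : pv ν (u, 0) = 0 := by
  simp [H.νv_eq]

theorem pv_pu_f_axis (H : AdaptedPureFrontal f ν h ν₁) : pv (pu f) (u, 0) = 0 := by
  simp [pv_pu_of_pv_eq_snd_smul H.contDiff_two_f.contDiffAt (H.differentiable_h (u, 0)) H.fv_eq]

theorem pv_pu_ν_axis (H : AdaptedPureFrontal f ν h ν₁) : pv (pu ν) (u, 0) = 0 := by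
  simp [pv_pu_of_pv_eq_snd_smul H.contDiff_two_ν.contDiffAt (H.differentiable_ν₁ (u, 0)) H.νv_eq]

theorem dot3_h_ν (H : AdaptedPureFrontal f ν h ν₁) (p : ℝ × ℝ) : dot3 (h p) (ν p) = 0 := by
  obtain ⟨u, v⟩ := p
  rcases eq_or_ne v 0 with rfl | hv
  · exact H.adapted_h_ν u
  · have hvν : v * dot3 (h (u, v)) (ν (u, v)) = 0 := by
      rw [← dot3_smul_left, ← H.fv_eq (u, v), H.orth_fv_ν]
    exact (mul_eq_zero.1 hvν).resolve_left hv

theorem dot3_ν_pv_h_axis (H : AdaptedPureFrontal f ν h ν₁) :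
    dot3 (ν (u, 0)) (pv h (u, 0)) = 0 := by
  have hprod := pv_dot3 (H.differentiable_h (u, 0)) (H.differentiable_ν (u, 0))
  rw [funext H.dot3_h_ν, H.pv_ν_axis, dot3_zero_right, add_zero, dot3_comm] at hprod
  simpa [pv] using hprod.symm

theorem pv_Ft_axis (H : AdaptedPureFrontal f ν h ν₁) :
    pv (Ft f h) (u, 0) = dot3 (pu f (u, 0)) (pv h (u, 0)) := by
  unfold Ft
  rw [pv_dot3 (H.differentiable_pu_f _) (H.differentiable_h _), H.pv_pu_f_axis, dot3_zero_left,
    zero_add]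

theorem pv_Gt_axis (H : AdaptedPureFrontal f ν h ν₁) :
    pv (Gt h) (u, 0) = 2 * dot3 (h (u, 0)) (pv h (u, 0)) := by
  unfold Gt
  rw [pv_dot3 (H.differentiable_h _) (H.differentiable_h _), dot3_comm, two_mul]

theorem pv_h_axis (H : AdaptedPureFrontal f ν h ν₁) :
    pv h (u, 0) = pv (Ft f h) (u, 0) • pu f (u, 0) + (pv (Gt h) (u, 0) / 2) • h (u, 0) := by
  rw [H.pv_Ft_axis, H.pv_Gt_axis, mul_div_cancel_left₀ _ two_ne_zero]
  have hexp := eq_dot3_smul_add_of_orthonormal (H.adapted_fu u) (H.adapted_h u) (H.unit_ν _)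
    (H.adapted_fu_h u) (H.orth_fu_ν _) (H.dot3_h_ν _) (pv h (u, 0))
  rwa [H.dot3_ν_pv_h_axis, zero_smul, add_zero] at hexp

end FrameDerivatives

section CoefficientDerivatives

theorem pv_Et_axis (H : AdaptedPureFrontal f ν h ν₁) : pv (Et f) (u, 0) = 0 := by
  unfold Et
  simp [pv_dot3 (H.differentiable_pu_f _) (H.differentiable_pu_f _), H.pv_pu_f_axis]

theorem pv_Lt_axis (H : AdaptedPureFrontal f ν h ν₁) : pv (Lt f ν) (u, 0) = 0 := by
  unfold Lt
  simp [pv_neg, pv_dot3 (H.differentiable_pu_f _) (H.differentiable_pu_ν _), H.pv_pu_f_axis,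
    H.pv_pu_ν_axis]

theorem pv_Mt_axis (H : AdaptedPureFrontal f ν h ν₁) :
    pv (Mt h ν) (u, 0) =
      pv (Ft f h) (u, 0) * Lt f ν (u, 0) + pv (Gt h) (u, 0) / 2 * Mt h ν (u, 0) := by
  unfold Mt
  rw [pv_neg, pv_dot3 (H.differentiable_h _) (H.differentiable_pu_ν _), H.pv_pu_ν_axis,
    H.pv_h_axis, dot3_add_left, dot3_smul_left, dot3_smul_left, dot3_zero_right, Lt]
  ring

theorem hasDerivAt_Et_axis (H : AdaptedPureFrontal f ν h ν₁) :
    HasDerivAt (fun t => Et f (u, t)) 0 0 :=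
  (hasDerivAt_pv (H.differentiable_Et (u, 0))).congr_deriv H.pv_Et_axis

theorem hasDerivAt_Ft_axis (H : AdaptedPureFrontal f ν h ν₁) :
    HasDerivAt (fun t => Ft f h (u, t)) (pv (Ft f h) (u, 0)) 0 :=
  hasDerivAt_pv (H.differentiable_Ft (u, 0))

theorem hasDerivAt_Gt_axis (H : AdaptedPureFrontal f ν h ν₁) :
    HasDerivAt (fun t => Gt h (u, t)) (pv (Gt h) (u, 0)) 0 :=
  hasDerivAt_pv (H.differentiable_Gt (u, 0))

theorem hasDerivAt_Lt_axis (H : AdaptedPureFrontal f ν h ν₁) :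
    HasDerivAt (fun t => Lt f ν (u, t)) 0 0 :=
  (hasDerivAt_pv (H.differentiable_Lt (u, 0))).congr_deriv H.pv_Lt_axis

theorem hasDerivAt_Mt_axis (H : AdaptedPureFrontal f ν h ν₁) :
    HasDerivAt (fun t => Mt h ν (u, t))
      (pv (Ft f h) (u, 0) * Lt f ν (u, 0) + pv (Gt h) (u, 0) / 2 * Mt h ν (u, 0)) 0 :=
  (hasDerivAt_pv (H.differentiable_Mt (u, 0))).congr_deriv H.pv_Mt_axis

theorem hasDerivAt_Nt1_axis (H : AdaptedPureFrontal f ν h ν₁) (hrc : rc f ν h ν₁ u = 0) :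
    HasDerivAt (fun t => Nt1 h ν₁ (u, t))
      (2 * pv (Ft f h) (u, 0) * Mt h ν (u, 0) + pv (Gt h) (u, 0) * Nt1 h ν₁ (u, 0)) 0 := by
  refine (hasDerivAt_pv (H.differentiable_Nt1 (u, 0))).congr_deriv ?_
  rw [rc] at hrc
  linarith

theorem hasDerivAt_gramDet_axis (H : AdaptedPureFrontal f ν h ν₁) :
    HasDerivAt (fun t => gramDet f h (u, t)) (pv (Gt h) (u, 0) * gramDet f h (u, 0)) 0 := by
  refine ((H.hasDerivAt_Et_axis.mul H.hasDerivAt_Gt_axis).sub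
    (H.hasDerivAt_Ft_axis.pow 2)).congr_deriv ?_
  simp [H.gramDet_axis, H.Et_axis, H.Ft_axis]

end CoefficientDerivatives

section FocalDerivatives

theorem hasDerivAt_Kg_axis (H : AdaptedPureFrontal f ν h ν₁) (hrc : rc f ν h ν₁ u = 0) :
    HasDerivAt (fun t => Kg f ν h ν₁ (u, t)) 0 0 := by
  refine hasDerivAt_div_of_proportional (c := pv (Gt h) (u, 0)) ?_ H.hasDerivAt_gramDet_axis
    H.gramDet_axis_ne_zero
  refine ((H.hasDerivAt_Lt_axis.mul (H.hasDerivAt_Nt1_axis hrc)).sub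
    (H.hasDerivAt_Mt_axis.pow 2)).congr_deriv ?_
  push_cast
  ring

theorem hasDerivAt_Hm_axis (H : AdaptedPureFrontal f ν h ν₁) (hrc : rc f ν h ν₁ u = 0) :
    HasDerivAt (fun t => Hm f ν h ν₁ (u, t)) 0 0 := by
  refine hasDerivAt_div_of_proportional (c := pv (Gt h) (u, 0)) ?_
    ((H.hasDerivAt_gramDet_axis.const_mul 2).congr_deriv (mul_left_comm _ _ _))
    (mul_ne_zero two_ne_zero H.gramDet_axis_ne_zero)
  refine (((H.hasDerivAt_Et_axis.mul (H.hasDerivAt_Nt1_axis hrc)).sub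
    ((H.hasDerivAt_Ft_axis.const_mul 2).mul H.hasDerivAt_Mt_axis)).add
    (H.hasDerivAt_Gt_axis.mul H.hasDerivAt_Lt_axis)).congr_deriv ?_
  rw [H.Et_axis, H.Ft_axis, H.Gt_axis]
  ring

theorem hasDerivAt_kap_axis (H : AdaptedPureFrontal f ν h ν₁) (hrc : rc f ν h ν₁ u = 0)
    (hHK : Hm f ν h ν₁ (u, 0) ^ 2 - Kg f ν h ν₁ (u, 0) ≠ 0) :
    HasDerivAt (fun t => kap f ν h ν₁ ε (u, t)) 0 0 := by
  have hH := H.hasDerivAt_Hm_axis hrc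
  have hsqrt := ((hH.pow 2).sub (H.hasDerivAt_Kg_axis hrc)).sqrt hHK
  exact (hH.add (hsqrt.const_mul ε)).congr_deriv (by simp)

theorem hasDerivAt_xj_axis (H : AdaptedPureFrontal f ν h ν₁) (hrc : rc f ν h ν₁ u = 0)
    (hHK : Hm f ν h ν₁ (u, 0) ^ 2 - Kg f ν h ν₁ (u, 0) ≠ 0) :
    HasDerivAt (fun t => xj f ν h ν₁ ε (u, t))
      ((pv (Gt h) (u, 0) / 2) • xj f ν h ν₁ ε (u, 0)) 0 := by
  have hκ := H.hasDerivAt_kap_axis (ε := ε) hrc hHK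
  have hfu := hasDerivAt_pv (H.differentiable_pu_f (u, 0))
  have hh := hasDerivAt_pv (H.differentiable_h (u, 0))
  refine (((H.hasDerivAt_Mt_axis.sub (hκ.mul H.hasDerivAt_Ft_axis)).neg.smul hfu).add
    ((H.hasDerivAt_Lt_axis.sub (hκ.mul H.hasDerivAt_Et_axis)).smul hh)).congr_deriv ?_
  simp only [Pi.neg_apply, Pi.sub_apply, Pi.mul_apply, H.pv_pu_f_axis, H.pv_h_axis, xj,
    H.Et_axis, H.Ft_axis]
  module

theorem pv_Cf_axis (H : AdaptedPureFrontal f ν h ν₁) (hrc : rc f ν h ν₁ u = 0)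
    (hHK : Hm f ν h ν₁ (u, 0) ^ 2 - Kg f ν h ν₁ (u, 0) ≠ 0)
    (hκ : kap f ν h ν₁ ε (u, 0) ≠ 0) : pv (Cf f ν h ν₁ ε) (u, 0) = 0 := by
  have hf := hasDerivAt_pv (H.contDiff_two_f.differentiable two_ne_zero (u, 0))
  have hν := hasDerivAt_pv (H.differentiable_ν (u, 0))
  have hρ := (H.hasDerivAt_kap_axis (ε := ε) hrc hHK).inv hκ
  refine pv_eq_of_hasDerivAt (H.differentiableAt_Cf hHK hκ) ((hf.add (hρ.smul hν)).congr_deriv ?_)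
  simp [H.pv_f_axis, H.pv_ν_axis]

theorem pv_ej_axis (H : AdaptedPureFrontal f ν h ν₁) (hrc : rc f ν h ν₁ u = 0)
    (hHK : Hm f ν h ν₁ (u, 0) ^ 2 - Kg f ν h ν₁ (u, 0) ≠ 0)
    (hx : xj f ν h ν₁ ε (u, 0) ≠ 0) : pv (ej f ν h ν₁ ε) (u, 0) = 0 := by
  have hx' := H.hasDerivAt_xj_axis (ε := ε) hrc hHK
  exact pv_eq_of_hasDerivAt (H.differentiableAt_ej hHK hx)
    (hasDerivAt_inv_smul_of_proportional (hasDerivAt_norm3_of_smul hx' hx) hx' (norm3_pos hx).ne')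

end FocalDerivatives

end AdaptedPureFrontal

theorem VD_axis {E : Type*} [NormedAddCommGroup E] [NormedSpace ℝ E] (f ν h ν₁ : ℝ × ℝ → R3)
    (ε : ℝ) (g : ℝ × ℝ → E) (u : ℝ) :
    VD f ν h ν₁ ε g (u, 0) = V2c f ν h ν₁ ε (u, 0) • pv g (u, 0) := by
  simp [VD, V1c]

theorem stmt_13_general {f ν h ν₁ : ℝ × ℝ → R3} (H : AdaptedPureFrontal f ν h ν₁) {ε u : ℝ}
    (hHK : 0 < Hm f ν h ν₁ (u, 0) ^ 2 - Kg f ν h ν₁ (u, 0))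
    (hκ : kap f ν h ν₁ ε (u, 0) ≠ 0) (hrc : rc f ν h ν₁ u = 0)
    (hx : xj f ν h ν₁ ε (u, 0) ≠ 0) :
    VD f ν h ν₁ ε (ej f ν h ν₁ ε) (u, 0) = 0 ∧
    ¬ Function.Injective
        ⇑(fderiv ℝ (fun p : ℝ × ℝ => (Cf f ν h ν₁ ε p, ej f ν h ν₁ ε p)) (u, 0)) := by
  have hC := H.pv_Cf_axis hrc hHK.ne' hκ
  have he := H.pv_ej_axis hrc hHK.ne' hx
  refine ⟨by rw [VD_axis, he, smul_zero], not_injective_fderiv_of_pv_eq_zero ?_⟩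
  rw [pv, (H.differentiableAt_Cf hHK.ne' hκ).fderiv_prodMk (H.differentiableAt_ej hHK.ne' hx)]
  exact Prod.ext hC he

/-- if κ_t(0) ≠ 0 and 0 is a singular point of C_j (equivalently
r_c(0) = 0), then d(e_j)(V_j)(0) = 0 and (C_j, e_j) is not an immersion at 0, i.e.
C_j is a frontal with unit normal e_j but not a front at 0. -/
theorem stmt_13 (f ν h ν₁ : ℝ × ℝ → R3) (H : AdaptedPureFrontal f ν h ν₁)
    (ε : ℝ) (hε : ε = 1 ∨ ε = -1)
    (hHK : ∀ p : ℝ × ℝ, Hm f ν h ν₁ p ^ 2 - Kg f ν h ν₁ p > 0)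
    (hκ : ∀ p : ℝ × ℝ, kap f ν h ν₁ ε p ≠ 0)
    (hkt : kt h ν 0 ≠ 0) (hrc : rc f ν h ν₁ 0 = 0)
    (hx : ∀ᶠ p in nhds (0 : ℝ × ℝ), xj f ν h ν₁ ε p ≠ 0) :
    VD f ν h ν₁ ε (ej f ν h ν₁ ε) 0 = 0 ∧
    ¬ Function.Injective
        ⇑(fderiv ℝ (fun p : ℝ × ℝ => (Cf f ν h ν₁ ε p, ej f ν h ν₁ ε p)) 0) :=
  stmt_13_general H (hHK (0, 0)) (hκ (0, 0)) hrc hx.self_of_nhds
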